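/- arXiv:1512.07505 — 2 statements merged into one kernel-verified Lean document; each statement's English description precedes it below -/
import Mathlib

section
/- Let P be a set of n points in general position in R^d with n = d² + d + 1. Then there exists a subset S ⊆ P of d+1 points and a partition of P \ S into d sets D_1, ..., D_d such that the convex hulls conv(D_1), ..., conv(D_d) have a common point, and the lexicographic minimum of their intersection belongs to conv(S). -/
/-- Lexicographic strict order on `ℝ^d`. -/
def LexLt {d : ℕ} (x y : Fin d → ℝ) : Prop :=
  ∃ i : Fin d, (∀ j : Fin d, j < i → x j = y j) ∧ x i < y i

/-- `m` is the lexicographic minimum of `S`. -/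
def IsLexMin {d : ℕ} (S : Set (Fin d → ℝ)) (m : Fin d → ℝ) : Prop :=
  m ∈ S ∧ ∀ x ∈ S, m = x ∨ LexLt m x

/-!
Splitting the points into `d + 1` classes whose hulls meet is Tverberg's theorem, obtained from the
colourful Carathéodory theorem by Sarkaria's transformation; as each hull needs only `d + 1` points
to contain a common point, the remaining ones can be distributed so that every class has at most
`d + 1` points. Let `m` be the lexicographic minimum of the intersection of the hulls. The `d + 1`
hulls and the convex set of all points lexicographically smaller than `m` have no common point, so
by Helly's theorem one class `j` can be dropped while `m` stays the minimum. The minimum `m` is then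
an extreme point of the intersection of the other `d` hulls, and a codimension count shows that at
most `d ^ 2` of their points suffice to keep `m` in all of them. Hence `d + 1` points, among them
the whole class `j`, are free to form `S`.
-/

open Function Module Set Topology
open scoped Finset RealInnerProductSpace

section OpenConvexHull

variable {ι K V : Type*} [AddCommGroup V] [Module ℝ V]

/-- The relative interior of the (possibly degenerate) simplex spanned by a finite family `q`: the
convex combinations of `q` all of whose weights are positive. -/
def openConvexHull [Fintype ι] (q : ι → V) : Set V :=
  {x | ∃ w : ι → ℝ, (∀ i, 0 < w i) ∧ ∑ i, w i = 1 ∧ ∑ i, w i • q i = x}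

lemma openConvexHull_subset_convexHull [Fintype ι] (q : ι → V) :
    openConvexHull q ⊆ convexHull ℝ (range q) := by
  rintro x ⟨w, hw, hsum, hx⟩
  exact mem_convexHull_of_exists_fintype w q (fun i ↦ (hw i).le) hsum mem_range_self hx

lemma nonempty_of_mem_openConvexHull [Fintype ι] {q : ι → V} {x : V}
    (hx : x ∈ openConvexHull q) : Nonempty ι := by
  obtain ⟨w, -, hsum, -⟩ := hx
  by_contra! h
  simp at hsum

lemma apply_eq_of_mem_openConvexHull [Fintype ι] {q : ι → V} {x : V} (hx : x ∈ openConvexHull q)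
    (f : V →ₗ[ℝ] ℝ) (hf : ∀ i, f x ≤ f (q i)) (i : ι) : f (q i) = f x := by
  obtain ⟨w, hw, hsum, rfl⟩ := hx
  set r := f (∑ i, w i • q i) with hr
  have hzero : ∑ i, w i * (f (q i) - r) = 0 := by
    simp [mul_sub, ← Finset.sum_mul, hsum, hr]
  have hterm := (Finset.sum_eq_zero_iff_of_nonneg fun i _ ↦
    mul_nonneg (hw i).le (sub_nonneg.2 (hf i))).1 hzero i (Finset.mem_univ i)
  exact sub_eq_zero.1 ((mul_eq_zero_iff_left (hw i).ne').1 hterm)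

lemma exists_sum_smul_eq_of_mem_vectorSpan_range [Fintype ι] {q : ι → V} {v : V}
    (hv : v ∈ vectorSpan ℝ (range q)) :
    ∃ u : ι → ℝ, ∑ i, u i = 0 ∧ ∑ i, u i • q i = v := by
  obtain ⟨s, w, hw, rfl⟩ := (mem_vectorSpan_iff_eq_weightedVSub ℝ).1 hv
  have hzero : ∑ i, (s : Set ι).indicator w i = 0 :=
    (Finset.sum_indicator_subset w s.subset_univ).trans hw
  refine ⟨(s : Set ι).indicator w, hzero, ?_⟩
  rw [← Finset.weightedVSub_eq_linear_combination _ hzero,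
    ← Finset.weightedVSub_indicator_subset w q s.subset_univ]

lemma eventually_add_smul_mem_openConvexHull [Fintype ι] {q : ι → V} {x v : V}
    (hx : x ∈ openConvexHull q) (hv : v ∈ vectorSpan ℝ (range q)) :
    ∀ᶠ t : ℝ in 𝓝 0, x + t • v ∈ openConvexHull q := by
  obtain ⟨w, hw, hsum, rfl⟩ := hx
  obtain ⟨u, hu, rfl⟩ := exists_sum_smul_eq_of_mem_vectorSpan_range hv
  have hpos : ∀ᶠ t : ℝ in 𝓝 0, ∀ i, 0 < w i + t * u i := by
    refine Filter.eventually_all.2 fun i ↦ ?_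
    have hcont : Continuous fun t : ℝ ↦ w i + t * u i := by fun_prop
    exact hcont.continuousAt.eventually_const_lt (by simpa using hw i)
  filter_upwards [hpos] with t ht
  refine ⟨fun i ↦ w i + t * u i, ht, ?_, ?_⟩
  · simp [Finset.sum_add_distrib, ← Finset.mul_sum, hsum, hu]
  · simp [add_smul, mul_smul, Finset.sum_add_distrib, Finset.smul_sum]

lemma exists_affineIndependent_mem_openConvexHull {p : K → V} {A : Set K} {x : V}
    (hx : x ∈ convexHull ℝ (p '' A)) :
    ∃ F : Finset K, ↑F ⊆ A ∧ AffineIndependent ℝ (fun k : F ↦ p k) ∧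
      x ∈ openConvexHull (fun k : F ↦ p k) := by
  classical
  obtain ⟨ι, _, z, w, hzA, hz, hw, hsum, hwx⟩ := eq_pos_convex_span_of_mem_convexHull hx
  choose k hkA hkz using fun i ↦ hzA (mem_range_self i)
  obtain rfl : p ∘ k = z := funext hkz
  have hk : Injective k := hz.injective.of_comp
  let e : ι ≃ Finset.univ.image k :=
    Equiv.ofBijective (fun i ↦ ⟨k i, by simp⟩) ⟨fun i j h ↦ hk (congrArg Subtype.val h), by
      rintro ⟨_, h⟩
      simpa using h⟩
  refine ⟨Finset.univ.image k, by simpa [range_subset_iff] using hkA, ?_, w ∘ e.symm, ?_, ?_, ?_⟩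
  · exact (affineIndependent_equiv e).1 hz
  · exact fun i ↦ hw _
  · rw [← hsum]
    exact e.symm.sum_comp w
  · rw [← hwx, ← e.sum_comp]
    simp only [comp_apply, Equiv.symm_apply_apply]
    rfl

end OpenConvexHull

section ExtremePoints

lemma finrank_le_sum_finrank_quotient_of_iInf_eq_bot {𝕜 V ι : Type*} [Field 𝕜] [AddCommGroup V]
    [Module 𝕜 V] [FiniteDimensional 𝕜 V] [Fintype ι] (U : ι → Submodule 𝕜 V)
    (hU : ⨅ i, U i = ⊥) : finrank 𝕜 V ≤ ∑ i, finrank 𝕜 (V ⧸ U i) := by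
  rw [← finrank_pi_fintype]
  refine LinearMap.finrank_le_finrank_of_injective (f := LinearMap.pi fun i ↦ (U i).mkQ) ?_
  rw [← LinearMap.ker_eq_bot, LinearMap.ker_pi]
  simpa only [Submodule.ker_mkQ] using hU

variable {ι V : Type*} [AddCommGroup V] [Module ℝ V]

lemma iInf_vectorSpan_eq_bot_of_mem_extremePoints [Finite ι] {κ : ι → Type*}
    [∀ i, Fintype (κ i)] {q : ∀ i, κ i → V} {m : V}
    (hm : m ∈ (⋂ i, convexHull ℝ (range (q i))).extremePoints ℝ)
    (hq : ∀ i, m ∈ openConvexHull (q i)) : ⨅ i, vectorSpan ℝ (range (q i)) = ⊥ := by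
  refine (Submodule.eq_bot_iff _).2 fun v hv ↦ ?_
  rw [Submodule.mem_iInf] at hv
  have hline : ∀ u : V, (∀ i, u ∈ vectorSpan ℝ (range (q i))) →
      ∀ᶠ t : ℝ in 𝓝 0, m + t • u ∈ ⋂ i, convexHull ℝ (range (q i)) := by
    intro u hu
    have hopen := Filter.eventually_all.2 fun i ↦
      eventually_add_smul_mem_openConvexHull (hq i) (hu i)
    filter_upwards [hopen] with t ht
    exact mem_iInter.2 fun i ↦ openConvexHull_subset_convexHull _ (ht i)
  obtain ⟨t, ⟨hplus, hminus⟩, ht : 0 < t⟩ :=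
    (((hline v hv).and (hline (-v) fun i ↦ neg_mem (hv i))).filter_mono nhdsWithin_le_nhds |>.and
      self_mem_nhdsWithin : ∀ᶠ t in 𝓝[>] (0 : ℝ), _).exists
  have hmid : m ∈ openSegment ℝ (m + t • v) (m + t • -v) :=
    ⟨1 / 2, 1 / 2, by norm_num, by norm_num, by norm_num, by module⟩
  have hend : m + t • v = m := (mem_extremePoints_iff_left.1 hm).2 _ hplus _ hminus hmid
  simpa [ht.ne'] using hend

lemma finrank_add_sum_card_le_of_mem_extremePoints [FiniteDimensional ℝ V] [Fintype ι]
    {κ : ι → Type*} [∀ i, Fintype (κ i)] {q : ∀ i, κ i → V} {m : V}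
    (hm : m ∈ (⋂ i, convexHull ℝ (range (q i))).extremePoints ℝ)
    (hq : ∀ i, m ∈ openConvexHull (q i)) (hind : ∀ i, AffineIndependent ℝ (q i)) :
    finrank ℝ V + ∑ i, Fintype.card (κ i) ≤ Fintype.card ι * (finrank ℝ V + 1) := by
  have hcard : ∀ i, finrank ℝ (V ⧸ vectorSpan ℝ (range (q i))) + Fintype.card (κ i)
      = finrank ℝ V + 1 := by
    intro i
    have := nonempty_of_mem_openConvexHull (hq i)
    rw [← (hind i).finrank_vectorSpan_add_one, ← add_assoc,
      Submodule.finrank_quotient_add_finrank]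
  calc finrank ℝ V + ∑ i, Fintype.card (κ i)
      ≤ ∑ i, finrank ℝ (V ⧸ vectorSpan ℝ (range (q i))) + ∑ i, Fintype.card (κ i) := by
        gcongr
        exact finrank_le_sum_finrank_quotient_of_iInf_eq_bot _
          (iInf_vectorSpan_eq_bot_of_mem_extremePoints hm hq)
    _ = Fintype.card ι * (finrank ℝ V + 1) := by simp [← Finset.sum_add_distrib, hcard]

lemma exists_finset_mem_convexHull_inter_of_mem_extremePoints {K : Type*}
    [FiniteDimensional ℝ V] [Fintype ι] {p : K → V} {A : ι → Set K} {m : V}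
    (hm : m ∈ (⋂ i, convexHull ℝ (p '' A i)).extremePoints ℝ) :
    ∃ B : Finset K, (B : Set K) ⊆ ⋃ i, A i ∧
      finrank ℝ V + B.card ≤ Fintype.card ι * (finrank ℝ V + 1) ∧
      ∀ i, m ∈ convexHull ℝ (p '' (A i ∩ B)) := by
  classical
  choose F hFA hind hF using fun i ↦
    exists_affineIndependent_mem_openConvexHull (mem_iInter.1 hm.1 i)
  have hmem : ∀ i, m ∈ convexHull ℝ (range fun k : F i ↦ p k) := fun i ↦
    openConvexHull_subset_convexHull _ (hF i)
  have hrange : ∀ i, range (fun k : F i ↦ p k) = p '' F i := fun i ↦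
    (image_eq_range p (F i : Set K)).symm
  have hsub : ⋂ i, convexHull ℝ (range fun k : F i ↦ p k) ⊆ ⋂ i, convexHull ℝ (p '' A i) := by
    refine iInter_mono fun i ↦ convexHull_mono ?_
    exact (hrange i).trans_subset (image_mono (hFA i))
  have hext := inter_extremePoints_subset_extremePoints_of_subset hsub ⟨mem_iInter.2 hmem, hm⟩
  refine ⟨Finset.univ.biUnion F, ?_, ?_, fun i ↦ ?_⟩
  · simpa using iUnion_mono hFA
  · calc finrank ℝ V + (Finset.univ.biUnion F).card
        ≤ finrank ℝ V + ∑ i, (F i).card := by gcongr; exact Finset.card_biUnion_le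
      _ ≤ Fintype.card ι * (finrank ℝ V + 1) := by
        simpa using finrank_add_sum_card_le_of_mem_extremePoints hext hF hind
  · refine convexHull_mono ?_ (hmem i)
    rw [hrange]
    exact image_mono (subset_inter (hFA i)
      (Finset.coe_subset.2 (Finset.subset_biUnion_of_mem F (Finset.mem_univ i))))

end ExtremePoints

section ColorfulCaratheodory

lemma linearIndependent_of_affineIndependent_of_apply_eq {ι R M : Type*} [Ring R] [NoZeroDivisors R]
    [AddCommGroup M] [Module R M] {q : ι → M} (hq : AffineIndependent R q) {f : M →ₗ[R] R} {r : R}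
    (hr : r ≠ 0) (hf : ∀ i, f (q i) = r) : LinearIndependent R q := by
  refine linearIndependent_iff'.2 fun s g hg ↦ hq.eq_zero_of_sum_eq_zero ?_ hg
  have hmul : (∑ i ∈ s, g i) * r = 0 := by simpa [hf, Finset.sum_mul] using congrArg f hg
  exact (mul_eq_zero_iff_right hr).1 hmul

lemma exists_mem_convexHull_image_compl {K V : Type*} [Fintype K] [AddCommGroup V] [Module ℝ V]
    [FiniteDimensional ℝ V] {p : K → V} {x : V} (hx : x ∈ convexHull ℝ (range p))
    (f : V →ₗ[ℝ] ℝ) (hfx : f x ≠ 0) (hf : ∀ k, f x ≤ f (p k))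
    (hcard : finrank ℝ V < Fintype.card K) : ∃ k, x ∈ convexHull ℝ (p '' {k}ᶜ) := by
  rw [← image_univ] at hx
  obtain ⟨F, -, hind, hxF⟩ := exists_affineIndependent_mem_openConvexHull hx
  have hlin : LinearIndependent ℝ fun k : F ↦ p k :=
    linearIndependent_of_affineIndependent_of_apply_eq hind hfx
      (apply_eq_of_mem_openConvexHull hxF f fun k ↦ hf k)
  have hFcard : F.card < Fintype.card K := by
    simpa using hlin.fintype_card_le_finrank.trans_lt hcard
  obtain ⟨k, -, hk⟩ := Finset.exists_mem_notMem_of_card_lt_card hFcard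
  refine ⟨k, convexHull_mono ?_ (openConvexHull_subset_convexHull _ hxF)⟩
  rintro _ ⟨l, rfl⟩
  exact mem_image_of_mem p fun hlk ↦ hk (hlk ▸ l.2)

variable {E : Type*} [NormedAddCommGroup E] [InnerProductSpace ℝ E]

lemma norm_sq_le_inner_of_isMinOn_norm {s : Set E} (hs : Convex ℝ s) {x y : E} (hx : x ∈ s)
    (hmin : IsMinOn norm s x) (hy : y ∈ s) : ‖x‖ ^ 2 ≤ ⟪x, y⟫ := by
  have hinf : ‖0 - x‖ = ⨅ z : s, ‖0 - (z : E)‖ := by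
    simpa using (hmin.iInf_eq hx).symm
  have hinner := (norm_eq_iInf_iff_real_inner_le_zero hs hx).1 hinf y hy
  rw [zero_sub, inner_neg_left, inner_sub_right, real_inner_self_eq_norm_sq] at hinner
  linarith

lemma exists_inner_nonpos_of_zero_mem_convexHull {s : Set E} (hs : 0 ∈ convexHull ℝ s) (y : E) :
    ∃ x ∈ s, ⟪y, x⟫ ≤ 0 := by
  by_contra! hpos
  have hsub : convexHull ℝ s ⊆ {x | 0 < innerₛₗ ℝ y x} :=
    convexHull_min hpos (convex_halfSpace_gt (innerₛₗ ℝ y).isLinear 0)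
  simpa using hsub hs

variable {K : Type*} [Fintype K] {J : K → Type*} [∀ k, Finite (J k)]

lemma exists_choice_zero_mem_convexHull [FiniteDimensional ℝ E] {a : ∀ k, J k → E}
    (hcard : finrank ℝ E < Fintype.card K) (ha : ∀ k, 0 ∈ convexHull ℝ (range (a k))) :
    ∃ c : ∀ k, J k, 0 ∈ convexHull ℝ (range fun k ↦ a k (c k)) := by
  classical
  have : Nonempty K := Fintype.card_pos_iff.1 (by lia)
  have : ∀ k, Nonempty (J k) := fun k ↦ range_nonempty_iff_nonempty.1 <|
    convexHull_nonempty_iff.1 ⟨0, ha k⟩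
  obtain ⟨y, hy, hmin⟩ := (isCompact_iUnion fun c : ∀ k, J k ↦
    (finite_range fun k ↦ a k (c k)).isCompact_convexHull ℝ).exists_isMinOn
      (nonempty_iUnion.2 ⟨Classical.arbitrary _, (range_nonempty _).convexHull⟩)
      continuous_norm.continuousOn
  have hinner : ∀ c : ∀ k, J k, y ∈ convexHull ℝ (range fun k ↦ a k (c k)) →
      ∀ k, ‖y‖ ^ 2 ≤ ⟪y, a k (c k)⟫ := fun c hc k ↦
    norm_sq_le_inner_of_isMinOn_norm (convex_convexHull ℝ _) hc
      (hmin.on_subset (subset_iUnion_of_subset c subset_rfl))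
      (subset_convexHull ℝ _ (mem_range_self k))
  obtain ⟨c, hc⟩ := mem_iUnion.1 hy
  suffices hy₀ : y = 0 from ⟨c, hy₀ ▸ hc⟩
  by_contra hy₀
  obtain ⟨k, hk⟩ := exists_mem_convexHull_image_compl hc (innerₛₗ ℝ y)
    (by simpa using hy₀) (by simpa using hinner c hc) hcard
  obtain ⟨_, ⟨j, rfl⟩, hj⟩ := exists_inner_nonpos_of_zero_mem_convexHull (ha k) y
  have hswap : y ∈ convexHull ℝ (range fun l ↦ a l (update c k j l)) := by
    refine convexHull_mono ?_ hk
    rintro _ ⟨l, hl, rfl⟩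
    exact ⟨l, by simp [update_of_ne hl]⟩
  have hnorm : ‖y‖ ^ 2 ≤ 0 := (hinner _ hswap k).trans (by simpa using hj)
  have hpos : 0 < ‖y‖ ^ 2 := by positivity
  exact hnorm.not_gt hpos

theorem exists_choice_mem_convexHull {V : Type*} [AddCommGroup V] [Module ℝ V]
    [FiniteDimensional ℝ V] {a : ∀ k, J k → V} {x : V} (hcard : finrank ℝ V < Fintype.card K)
    (ha : ∀ k, x ∈ convexHull ℝ (range (a k))) :
    ∃ c : ∀ k, J k, x ∈ convexHull ℝ (range fun k ↦ a k (c k)) := by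
  let e : V ≃ₗ[ℝ] EuclideanSpace ℝ (Fin (finrank ℝ V)) := LinearEquiv.ofFinrankEq _ _ (by simp)
  let φ : V ≃ᵃ[ℝ] EuclideanSpace ℝ (Fin (finrank ℝ V)) :=
    (AffineEquiv.vaddConst ℝ x).symm.trans e.toAffineEquiv
  have hφ : ∀ s : Set V, 0 ∈ convexHull ℝ (φ '' s) ↔ x ∈ convexHull ℝ s := by
    intro s
    have hφx : φ x = 0 := by simp [φ]
    have himage := (φ : V →ᵃ[ℝ] EuclideanSpace ℝ (Fin (finrank ℝ V))).image_convexHull s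
    rw [AffineEquiv.coe_toAffineMap] at himage
    rw [← himage, ← hφx, φ.injective.mem_set_image]
  simp only [← hφ, ← range_comp] at ha ⊢
  exact exists_choice_zero_mem_convexHull (by simpa using hcard) ha

end ColorfulCaratheodory

section Tverberg

variable {K ι : Type*} [Fintype K] [Fintype ι] {V : Type*} [AddCommGroup V] [Module ℝ V]

lemma convexHull_range_eq_image_stdSimplex (q : ι → V) :
    convexHull ℝ (range q) = Fintype.linearCombination ℝ q '' stdSimplex ℝ ι := by
  classical
  rw [← convexHull_rangle_single_eq_stdSimplex, LinearMap.image_convexHull, ← range_comp]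
  congr 2
  ext i
  simp [Fintype.linearCombination_apply_single]

lemma zero_mem_convexHull_range_of_sum_eq_zero [Nonempty ι] {q : ι → V} (hq : ∑ i, q i = 0) :
    0 ∈ convexHull ℝ (range q) := by
  have hmem := Finset.univ.centerMass_mem_convexHull (w := fun _ : ι ↦ (1 : ℝ)) (z := q)
    (fun _ _ ↦ zero_le_one) (by simp [Fintype.card_pos]) fun i _ ↦ mem_range_self i
  simpa [Finset.centerMass, hq] using hmem

lemma finrank_quotient_range_pi_id [FiniteDimensional ℝ V] [Nonempty ι] :
    finrank ℝ ((ι → V) ⧸ LinearMap.range (LinearMap.pi fun _ : ι ↦ (LinearMap.id : V →ₗ[ℝ] V)))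
      = (Fintype.card ι - 1) * finrank ℝ V := by
  have hinj : Injective (LinearMap.pi fun _ : ι ↦ (LinearMap.id : V →ₗ[ℝ] V)) :=
    fun x y hxy ↦ congrFun hxy (Classical.arbitrary ι)
  rw [Submodule.finrank_quotient, LinearMap.finrank_range_of_inj hinj, finrank_pi_fintype]
  simp [Nat.sub_mul]

lemma exists_coloring_sum_smul_eq [FiniteDimensional ℝ V] [Nonempty ι] [DecidableEq ι] (u : K → V)
    (hcard : (Fintype.card ι - 1) * finrank ℝ V < Fintype.card K) :
    ∃ c : K → ι, ∃ w ∈ stdSimplex ℝ K, ∃ z : V, ∀ i, ∑ k with c k = i, w k • u k = z := by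
  -- Modulo the diagonal, the copies of `u k` placed in the different coordinates sum to zero.
  let Δ := LinearMap.range (LinearMap.pi fun _ : ι ↦ (LinearMap.id : V →ₗ[ℝ] V))
  let a : K → ι → (ι → V) ⧸ Δ := fun k i ↦ Δ.mkQ (Pi.single i (u k))
  have ha : ∀ k, 0 ∈ convexHull ℝ (range (a k)) := by
    refine fun k ↦ zero_mem_convexHull_range_of_sum_eq_zero ?_
    rw [← map_sum, ← LinearMap.mem_ker, Submodule.ker_mkQ]
    exact ⟨u k, by ext; simp⟩
  obtain ⟨c, hc⟩ := exists_choice_mem_convexHull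
    (by rwa [finrank_quotient_range_pi_id]) ha
  rw [convexHull_range_eq_image_stdSimplex] at hc
  obtain ⟨w, hw, hsum⟩ := hc
  have hmem : ∑ k, w k • Pi.single (M := fun _ ↦ V) (c k) (u k) ∈ Δ := by
    rw [← Δ.ker_mkQ, LinearMap.mem_ker, map_sum, ← hsum, Fintype.linearCombination_apply]
    simp only [a, map_smul]
  obtain ⟨z, hz⟩ := hmem
  refine ⟨c, w, hw, z, fun i ↦ ?_⟩
  simpa [Finset.sum_apply, Pi.single_apply, Finset.sum_filter, eq_comm] using (congrFun hz i).symm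

theorem exists_coloring_iInter_convexHull_nonempty [FiniteDimensional ℝ V] [Nonempty ι] (p : K → V)
    (hcard : (Fintype.card ι - 1) * (finrank ℝ V + 1) < Fintype.card K) :
    ∃ c : K → ι, (⋂ i, convexHull ℝ (p '' (c ⁻¹' {i}))).Nonempty := by
  let _ := Classical.decEq ι
  obtain ⟨c, w, hw, ⟨z, t⟩, hz⟩ := exists_coloring_sum_smul_eq (ι := ι) (fun k ↦ (p k, (1 : ℝ)))
    (by simpa using hcard)
  have hpoint : ∀ i, ∑ k with c k = i, w k • p k = z := fun i ↦ by
    simpa [Prod.fst_sum] using congrArg Prod.fst (hz i)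
  have hweight : ∀ i, ∑ k with c k = i, w k = t := fun i ↦ by
    simpa [Prod.snd_sum] using congrArg Prod.snd (hz i)
  have htotal : Fintype.card ι * t = 1 := by
    calc Fintype.card ι * t = ∑ i, ∑ k with c k = i, w k := by simp [hweight]
      _ = 1 := by rw [Finset.sum_fiberwise, hw.2]
  have ht : 0 < t := pos_of_mul_pos_right (htotal ▸ one_pos) (Nat.cast_nonneg _)
  refine ⟨c, t⁻¹ • z, mem_iInter.2 fun i ↦ ?_⟩
  rw [← hpoint i, ← hweight i]
  refine Finset.centerMass_mem_convexHull _ (fun k _ ↦ hw.1 k) ((hweight i).symm ▸ ht) ?_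
  exact fun k hk ↦ mem_image_of_mem p (by simpa using hk)

lemma exists_extend_coloring_card_fiber_le [DecidableEq ι] {n : ℕ}
    (hn : Fintype.card K ≤ Fintype.card ι * n) (s : Finset K) (c : K → ι)
    (hc : ∀ i, #{k ∈ s | c k = i} ≤ n) :
    ∃ c' : K → ι, (∀ k ∈ s, c' k = c k) ∧ ∀ i, #{k | c' k = i} ≤ n := by
  classical
  by_cases hs : s = Finset.univ
  · exact ⟨c, fun _ _ ↦ rfl, hs ▸ hc⟩
  obtain ⟨a, ha⟩ : ∃ a, a ∉ s := by simpa [Finset.eq_univ_iff_forall] using hs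
  obtain ⟨i, -, hi⟩ := Finset.exists_card_fiber_lt_of_card_lt_mul (s := s) (f := c)
    (((Finset.card_lt_iff_ne_univ s).2 hs).trans_le hn)
  have hupdate : ∀ k ∈ s, update c a i k = c k := fun k hk ↦
    update_of_ne (ne_of_mem_of_not_mem hk ha) i c
  have hfiber : ∀ j, {k ∈ s | update c a i k = j} = {k ∈ s | c k = j} := fun j ↦
    Finset.filter_congr fun k hk ↦ by rw [hupdate k hk]
  obtain ⟨c', hextend, hc'⟩ := exists_extend_coloring_card_fiber_le hn (s.cons a ha) (update c a i)
    fun j ↦ by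
      rw [Finset.filter_cons]
      split_ifs with hij
      · rw [Finset.card_cons, hfiber, ← hij, update_self]
        exact hi
      · rw [hfiber]
        exact hc j
  refine ⟨c', fun k hk ↦ ?_, hc'⟩
  rw [hextend k (Finset.mem_cons_of_mem hk), hupdate k hk]
termination_by Fintype.card K - #s
decreasing_by
  have hsK := (Finset.card_lt_iff_ne_univ s).2 hs
  rw [Finset.card_cons]
  lia

theorem exists_balanced_coloring_iInter_convexHull_nonempty [FiniteDimensional ℝ V] [Nonempty ι]
    [DecidableEq ι] (p : K → V)
    (hlt : (Fintype.card ι - 1) * (finrank ℝ V + 1) < Fintype.card K)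
    (hle : Fintype.card K ≤ Fintype.card ι * (finrank ℝ V + 1)) :
    ∃ c : K → ι, (∀ i, #{k | c k = i} ≤ finrank ℝ V + 1) ∧
      (⋂ i, convexHull ℝ (p '' (c ⁻¹' {i}))).Nonempty := by
  classical
  obtain ⟨c, x, hx⟩ := exists_coloring_iInter_convexHull_nonempty (ι := ι) p hlt
  choose F hFc hind hF using fun i ↦
    exists_affineIndependent_mem_openConvexHull (mem_iInter.1 hx i)
  have hFcard : ∀ i, #(F i) ≤ finrank ℝ V + 1 := fun i ↦ by
    simpa using (hind i).card_le_finrank_succ.trans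
      (Nat.succ_le_succ (Submodule.finrank_le _))
  have hcolor : ∀ i, {k ∈ Finset.univ.biUnion F | c k = i} ⊆ F i := by
    intro i k hk
    obtain ⟨⟨j, hkj⟩, rfl⟩ := by simpa using hk
    rwa [show c k = j from hFc j hkj]
  obtain ⟨c', hagree, hc'⟩ := exists_extend_coloring_card_fiber_le hle (Finset.univ.biUnion F) c
    fun i ↦ (Finset.card_le_card (hcolor i)).trans (hFcard i)
  refine ⟨c', hc', x, mem_iInter.2 fun i ↦ ?_⟩
  refine convexHull_mono ?_ (openConvexHull_subset_convexHull _ (hF i))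
  rintro _ ⟨k, rfl⟩
  refine mem_image_of_mem p ((hagree k ?_).trans (hFc i k.2))
  exact Finset.mem_biUnion.2 ⟨i, Finset.mem_univ i, k.2⟩

end Tverberg

section Lex

instance posSMulStrictMono_piLex {ι 𝕜 : Type*} {α : ι → Type*} [LinearOrder ι] [Preorder 𝕜]
    [Zero 𝕜] [∀ i, SMul 𝕜 (α i)] [∀ i, PartialOrder (α i)] [∀ i, PosSMulStrictMono 𝕜 (α i)] :
    PosSMulStrictMono 𝕜 (Lex (∀ i, α i)) where
  smul_lt_smul_of_pos_left := fun _ ha _ _ ⟨i, heq, hlt⟩ ↦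
    ⟨i, fun j hj ↦ congrArg _ (heq j hj), smul_lt_smul_of_pos_left hlt ha⟩

lemma isLexMin_iff_isMinOn_toLex {d : ℕ} {s : Set (Fin d → ℝ)} {m : Fin d → ℝ} :
    IsLexMin s m ↔ m ∈ s ∧ IsMinOn toLex s m :=
  and_congr_right fun _ ↦ forall₂_congr fun x _ ↦
    (le_iff_eq_or_lt (a := toLex m) (b := toLex x)).symm

variable {ι : Type*} [LinearOrder ι] {α : ι → Type*} [∀ i, LinearOrder (α i)]
  [∀ i, TopologicalSpace (α i)] [∀ i, ClosedIicTopology (α i)]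

lemma exists_subset_forall_eq_or_exists_lt {s : Set (∀ i, α i)} (hs : IsCompact s)
    (hne : s.Nonempty) (I : Finset ι) :
    ∃ t ⊆ s, IsCompact t ∧ t.Nonempty ∧ ∀ y ∈ t, ∀ x ∈ s, (x ∈ t ∧ ∀ i ∈ I, y i = x i) ∨
      ∃ i ∈ I, (∀ j ∈ I, j < i → y j = x j) ∧ y i < x i := by
  classical
  induction I using Finset.induction_on_max with
  | empty => exact ⟨s, subset_rfl, hs, hne, by simp⟩
  | insert a I ha ih =>
    obtain ⟨t, hts, ht, htne, hlex⟩ := ih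
    obtain ⟨b, hbt, hmin⟩ := ht.exists_isMinOn htne (continuous_apply a).continuousOn
    refine ⟨t ∩ {y | y a ≤ b a}, inter_subset_left.trans hts,
      ht.inter_right (isClosed_Iic.preimage (continuous_apply a)), ⟨b, hbt, le_rfl⟩, ?_⟩
    rintro y ⟨hyt, hyb⟩ x hx
    obtain ⟨hxt, heq⟩ | ⟨i, hi, heq, hlt⟩ := hlex y hyt x hx
    · obtain hya | hya := (hyb.trans (hmin hxt)).eq_or_lt
      · exact .inl ⟨⟨hxt, hya.symm.trans_le hyb⟩, Finset.forall_mem_insert _ _ _ |>.2 ⟨hya, heq⟩⟩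
      · exact .inr ⟨a, Finset.mem_insert_self a I, fun j hj hja ↦
          heq j (Finset.mem_of_mem_insert_of_ne hj hja.ne), hya⟩
    · exact .inr ⟨i, Finset.mem_insert_of_mem hi, fun j hj hji ↦
        heq j (Finset.mem_of_mem_insert_of_ne hj (hji.trans (ha i hi)).ne) hji, hlt⟩

theorem exists_isMinOn_toLex [Finite ι] {s : Set (∀ i, α i)} (hs : IsCompact s)
    (hne : s.Nonempty) : ∃ m ∈ s, IsMinOn toLex s m := by
  have := Fintype.ofFinite ι
  obtain ⟨t, hts, -, ⟨m, hm⟩, hlex⟩ :=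
    exists_subset_forall_eq_or_exists_lt hs hne Finset.univ
  refine ⟨m, hts hm, isMinOn_iff.2 fun x hx ↦ ?_⟩
  obtain ⟨-, heq⟩ | ⟨i, -, heq, hlt⟩ := hlex m hm x hx
  · exact le_of_eq (funext fun i ↦ heq i (Finset.mem_univ i))
  · exact le_of_lt (show toLex m < toLex x from ⟨i, fun j ↦ heq j (Finset.mem_univ j), hlt⟩)

end Lex

section Minimizers

lemma mem_extremePoints_of_isMinOn_linearMap {𝕜 V W : Type*} [Semiring 𝕜] [PartialOrder 𝕜]
    [AddCommMonoid V] [Module 𝕜 V] [AddCommMonoid W] [PartialOrder W]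
    [IsOrderedCancelAddMonoid W] [Module 𝕜 W] [PosSMulStrictMono 𝕜 W] {f : V →ₗ[𝕜] W}
    (hf : Injective f) {s : Set V} {m : V} (hm : m ∈ s) (hmin : IsMinOn f s m) :
    m ∈ s.extremePoints 𝕜 := by
  refine mem_extremePoints_iff_left.2 ⟨hm, ?_⟩
  rintro x hx y hy ⟨a, b, ha, hb, hab, hxy⟩
  by_contra hne
  have hlt : f m < f x := (hmin hx).lt_of_ne fun h ↦ hne (hf h.symm)
  have hself : f m < f m := calc
    f m = a • f m + b • f m := by rw [← add_smul, hab, one_smul]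
    _ < a • f x + b • f y := by
      exact add_lt_add_of_lt_of_le (smul_lt_smul_of_pos_left hlt ha)
        (smul_le_smul_of_nonneg_left (hmin hy) hb.le)
    _ = f m := by rw [← hxy, map_add, map_smul, map_smul]
  exact hself.false

lemma exists_isMinOn_iInter_ne_of_finrank_lt {𝕜 V ι β : Type*} [Field 𝕜] [LinearOrder 𝕜]
    [IsStrictOrderedRing 𝕜] [AddCommGroup V] [Module 𝕜 V] [FiniteDimensional 𝕜 V] [Fintype ι]
    [LinearOrder β] {f : V → β} (hf : QuasiconvexOn 𝕜 univ f) {A : ι → Set V}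
    (hA : ∀ i, Convex 𝕜 (A i)) (hcard : finrank 𝕜 V < Fintype.card ι) {m : V}
    (hm : m ∈ ⋂ i, A i) (hmin : IsMinOn f (⋂ i, A i) m) :
    ∃ j, IsMinOn f (⋂ i, ⋂ (_ : i ≠ j), A i) m := by
  classical
  by_contra! hbetter
  simp only [isMinOn_iff, not_forall, not_le] at hbetter
  choose x hxA hxm using hbetter
  let F : Option ι → Set V := fun o ↦ o.elim {y | f y < f m} A
  have hF : ∀ o ∈ Finset.univ, Convex 𝕜 (F o)
    | none, _ => by simpa [F] using hf.convex_lt (f m)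
    | some i, _ => hA i
  have hmiss : ∀ o, ∃ y, ∀ o' ≠ o, y ∈ F o'
    | none => ⟨m, by simpa [F, Option.forall] using hm⟩
    | some j => ⟨x j, by simpa [F, Option.forall] using ⟨hxm j, mem_iInter₂.1 (hxA j)⟩⟩
  obtain ⟨y, hy⟩ := Convex.helly_theorem' hF fun I _ hI ↦ by
    obtain ⟨o, -, ho⟩ := Finset.exists_mem_notMem_of_card_lt_card (s := I) (t := Finset.univ)
      (by simpa using hI.trans_lt (Nat.succ_lt_succ hcard))
    exact (hmiss o).imp fun y hy ↦ mem_iInter₂.2 fun o' ho' ↦ hy o' (ne_of_mem_of_not_mem ho' ho)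
  simp only [Finset.mem_univ, iInter_true, mem_iInter, Option.forall] at hy
  exact (hmin (mem_iInter.2 hy.2)).not_gt hy.1

end Minimizers

section LexMinTverberg

variable {K V : Type*} [AddCommGroup V] [Module ℝ V] [FiniteDimensional ℝ V] {W : Type*}
  [AddCommGroup W] [LinearOrder W] [IsOrderedAddMonoid W] [Module ℝ W] [PosSMulStrictMono ℝ W]
  {d : ℕ} {f : V →ₗ[ℝ] W} {p : K → V} {m : V}

lemma exists_succAbove_isMinOn_iInter_convexHull (hd : finrank ℝ V = d) (hf : Injective f)
    {A : Fin (d + 1) → Set K} (hm : m ∈ ⋂ i, convexHull ℝ (p '' A i))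
    (hmin : IsMinOn f (⋂ i, convexHull ℝ (p '' A i)) m) :
    ∃ j : Fin (d + 1), IsMinOn f (⋂ i, convexHull ℝ (p '' A (j.succAbove i))) m ∧
      ∃ B : Finset K, (B : Set K) ⊆ ⋃ i, A (j.succAbove i) ∧ #B ≤ d ^ 2 ∧
        ∀ i, m ∈ convexHull ℝ (p '' (A (j.succAbove i) ∩ B)) := by
  obtain ⟨j, hj⟩ := exists_isMinOn_iInter_ne_of_finrank_lt (f.convexOn convex_univ).quasiconvexOn
    (fun i ↦ convex_convexHull ℝ _) (by simp [hd]) hm hmin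
  have hminj : IsMinOn f (⋂ i, convexHull ℝ (p '' A (j.succAbove i))) m := by
    refine hj.on_subset fun x hx ↦ mem_iInter₂.2 fun i hij ↦ ?_
    obtain ⟨i, rfl⟩ := Fin.exists_succAbove_eq hij
    exact mem_iInter.1 hx i
  obtain ⟨B, hBA, hBcard, hB⟩ := exists_finset_mem_convexHull_inter_of_mem_extremePoints
    (mem_extremePoints_of_isMinOn_linearMap hf (mem_iInter.2 fun i ↦ mem_iInter.1 hm _) hminj)
  refine ⟨j, hminj, B, hBA, ?_, hB⟩
  rw [hd, Fintype.card_fin] at hBcard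
  lia

theorem exists_subset_partition_isMinOn_mem_convexHull [Fintype K] (hd : finrank ℝ V = d)
    (hK : d ^ 2 + d + 1 ≤ Fintype.card K) (hf : Injective f) {c : K → Fin (d + 1)}
    (hc : ∀ i, #{k | c k = i} ≤ d + 1) (hm : m ∈ ⋂ i, convexHull ℝ (p '' (c ⁻¹' {i})))
    (hmin : IsMinOn f (⋂ i, convexHull ℝ (p '' (c ⁻¹' {i}))) m) :
    ∃ S : Finset K, #S = d + 1 ∧ m ∈ convexHull ℝ (p '' S) ∧
      ∃ D : Fin d → Finset K, (∀ i j, i ≠ j → Disjoint (D i) (D j)) ∧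
        ⋃ i, (D i : Set K) = (S : Set K)ᶜ ∧ m ∈ ⋂ i, convexHull ℝ (p '' D i) ∧
        IsMinOn f (⋂ i, convexHull ℝ (p '' D i)) m := by
  classical
  obtain ⟨j, hj, B, hBc, hBcard, hB⟩ := exists_succAbove_isMinOn_iInter_convexHull hd hf hm hmin
  have hjB : ({k | c k = j} : Finset K) ⊆ Bᶜ := fun k hk ↦ Finset.mem_compl.2 fun hkB ↦ by
    obtain ⟨i, hi⟩ := mem_iUnion.1 (hBc hkB)
    exact j.succAbove_ne i (hi.symm.trans (by simpa using hk))
  have hBcompl : d + 1 ≤ #Bᶜ := by rw [Finset.card_compl]; lia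
  obtain ⟨S, hjS, hSB, hScard⟩ := Finset.exists_subsuperset_card_eq hjB (hc j) hBcompl
  let D : Fin d → Finset K := fun i ↦ {k | k ∉ S ∧ c k = j.succAbove i}
  have hD : ⋃ i, (D i : Set K) = (S : Set K)ᶜ := by
    ext k
    have hkS : k ∉ S → ∃ i, c k = j.succAbove i := fun hk ↦
      (Fin.exists_succAbove_eq fun hkj ↦ hk (hjS (by simpa using hkj))).imp fun _ ↦ Eq.symm
    simpa [D] using hkS
  have hmD : ∀ i, m ∈ convexHull ℝ (p '' D i) := fun i ↦ by
    refine convexHull_mono (image_mono fun k hk ↦ ?_) (hB i)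
    simpa [D] using ⟨fun hkS ↦ Finset.mem_compl.1 (hSB hkS) hk.2, hk.1⟩
  refine ⟨S, hScard, ?_, D, fun i i' hii' ↦ ?_, hD, mem_iInter.2 hmD, hj.on_subset ?_⟩
  · exact convexHull_mono (image_mono fun k hk ↦ hjS (by simpa using hk)) (mem_iInter.1 hm j)
  · exact Finset.disjoint_filter.2 fun k _ hk hk' ↦
      hii' (j.succAbove_right_injective (hk.2.symm.trans hk'.2))
  · refine iInter_mono fun i ↦ convexHull_mono (image_mono fun k hk ↦ ?_)
    exact (Finset.mem_filter.1 hk).2.2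

theorem exists_subset_partition_isLexMin_mem_convexHull [Fintype K] (p : K → Fin d → ℝ)
    (hge : d ^ 2 + d + 1 ≤ Fintype.card K) (hle : Fintype.card K ≤ (d + 1) ^ 2) :
    ∃ S : Finset K, #S = d + 1 ∧
      ∃ D : Fin d → Finset K, (∀ i j, i ≠ j → Disjoint (D i) (D j)) ∧
        ⋃ i, (D i : Set K) = (S : Set K)ᶜ ∧
        ∃ m, IsLexMin (⋂ i, convexHull ℝ (p '' D i)) m ∧ m ∈ convexHull ℝ (p '' S) := by
  obtain ⟨c, hc, hne⟩ := exists_balanced_coloring_iInter_convexHull_nonempty (ι := Fin (d + 1)) p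
    (by simp; lia) (by simp; lia)
  have hcompact : IsCompact (⋂ i, convexHull ℝ (p '' (c ⁻¹' {i}))) :=
    .of_isClosed_subset ((toFinite (p '' (c ⁻¹' {0}))).isCompact_convexHull ℝ)
      (isClosed_iInter fun i ↦ (toFinite _).isClosed_convexHull ℝ) (iInter_subset _ 0)
  obtain ⟨m, hm, hmin⟩ := exists_isMinOn_toLex hcompact hne
  obtain ⟨S, hS, hmS, D, hdisj, hunion, hmD, hminD⟩ :=
    exists_subset_partition_isMinOn_mem_convexHull (finrank_fin_fun ℝ) hge
      (toLexLinearEquiv ℝ (Fin d → ℝ)).injective (by simpa using hc) hm hmin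
  exact ⟨S, hS, D, hdisj, hunion, m, isLexMin_iff_isMinOn_toLex.2 ⟨hmD, hminD⟩, hmS⟩

end LexMinTverberg

theorem exists_tverberg_point_in_simplex_general {K : Type*} {d : ℕ} (p : K → Fin d → ℝ)
    (P : Finset K) (hge : d ^ 2 + d + 1 ≤ #P) (hle : #P ≤ (d + 1) ^ 2) :
    ∃ S : Finset K, S ⊆ P ∧ #S = d + 1 ∧
      ∃ D : Fin d → Finset K, (∀ i j, i ≠ j → Disjoint (D i) (D j)) ∧
        ⋃ i, (D i : Set K) = (P : Set K) \ S ∧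
        ∃ m, IsLexMin (⋂ i, convexHull ℝ (p '' D i)) m ∧ m ∈ convexHull ℝ (p '' S) := by
  obtain ⟨S, hS, D, hdisj, hunion, m, hm, hmS⟩ :=
    exists_subset_partition_isLexMin_mem_convexHull (fun k : P ↦ p k) (by simpa) (by simpa)
  have himage : ∀ T : Finset P, p '' (T.map (.subtype _)) = (fun k : P ↦ p k) '' T := by
    simp [image_image]
  refine ⟨S.map (.subtype _), Finset.map_subtype_subset S, by simpa, fun i ↦ (D i).map (.subtype _),
    fun i j hij ↦ (Finset.disjoint_map _).2 (hdisj i j hij), ?_, m, ?_, ?_⟩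
  · simp [← image_iUnion, hunion, image_compl_eq_range_sdiff_image]
  · simpa only [himage] using hm
  · simpa only [himage] using hmS

/-- for a set `P` of `d²+d+1` points in general position in `ℝ^d`
there is a `(d+1)`-point subset `S ⊆ P` and a partition of `P \ S` into `d` sets
whose convex hulls have a common point, such that the lexicographic minimum of the
intersection of these convex hulls lies in `conv(S)`. -/
theorem exists_tverberg_point_in_simplex (d n : ℕ) (hd : 1 ≤ d)
    (hn : n = d ^ 2 + d + 1) (P : Finset (Fin d → ℝ)) (hcard : P.card = n)
    (hgen : ∀ T : Finset (Fin d → ℝ), T ⊆ P → T.card = d + 1 →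
      AffineIndependent ℝ (fun x : T => (x : Fin d → ℝ))) :
    ∃ S : Finset (Fin d → ℝ), S ⊆ P ∧ S.card = d + 1 ∧
      ∃ D : Fin d → Finset (Fin d → ℝ),
        (∀ i j, i ≠ j → Disjoint (D i) (D j)) ∧
        (⋃ i, (D i : Set (Fin d → ℝ))) = (P : Set (Fin d → ℝ)) \ (S : Set (Fin d → ℝ)) ∧
        ∃ m : Fin d → ℝ,
          IsLexMin (⋂ i, convexHull ℝ (D i : Set (Fin d → ℝ))) m ∧
          m ∈ convexHull ℝ (S : Set (Fin d → ℝ)) := by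
  obtain rfl := hn
  simpa using exists_tverberg_point_in_simplex_general id P hcard.ge (by lia)
end

section
/- Let (X, S) be a finite set system of VC-dimension at most d on n elements. Then for every r ≥ 2 there exists a subset N ⊆ X of size O(d·r·log r) such that every S' ∈ S with |S'| > n/r contains a point of N. -/
/-- `A` is shattered by the set system `𝒮`. -/
def Shattered {α : Type} [DecidableEq α] (𝒮 : Finset (Finset α)) (A : Finset α) : Prop :=
  ∀ B ⊆ A, ∃ S' ∈ 𝒮, S' ∩ A = B

/-!
Draw two independent samples `x` and `y` of `m` points each, and give a set `S` the weight
`2 ^ #{i | y i ∈ S}` if `S` misses `x`, and `0` otherwise. If no `m` points form a net, every `x` is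
missed by some `S` of measure at least `ε`, so the largest weight of a set in the family has
expectation at least `(1 + ε) ^ m`. On the other hand, exchanging `x i` and `y i` independently with
probability `1 / 2` does not change the distribution of the sample, and it makes the expected weight
of each fixed set at most `1`; hence the largest weight has expectation at most the number of traces
of the family on `2 * m` points, which by Sauer–Shelah grows polynomially in `m`.
-/

open MeasureTheory ProbabilityTheory Finset
open scoped ENNReal

section Traces

variable {α : Type*} {𝒮 : Set (Set α)} {A B : Finset α} {d : ℕ}

open Classical in
/-- The trace of the set family `𝒮` on the finite set `A`: the sets `S ∩ A` with `S ∈ 𝒮`. -/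
noncomputable def traces (𝒮 : Set (Set α)) (A : Finset α) : Finset (Finset α) :=
  {B ∈ A.powerset | ∃ S ∈ 𝒮, S ∩ (A : Set α) = B}

/-- The family `𝒮` has VC-dimension at most `d`: every finite set it shatters has at most `d`
elements. A bound rather than a numerical dimension, since the latter may be infinite. -/
def HasVCDimLE (𝒮 : Set (Set α)) (d : ℕ) : Prop :=
  ∀ A : Finset α, (∀ B ⊆ A, ∃ S ∈ 𝒮, S ∩ (A : Set α) = B) → #A ≤ d

lemma mem_traces : B ∈ traces 𝒮 A ↔ ∃ S ∈ 𝒮, S ∩ (A : Set α) = B := by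
  simp only [traces, mem_filter, mem_powerset, and_iff_right_iff_imp]
  rintro ⟨S, -, hSB⟩
  exact coe_subset.1 (hSB ▸ Set.inter_subset_right)

lemma subset_of_mem_traces (hB : B ∈ traces 𝒮 A) : B ⊆ A := by
  classical exact mem_powerset.1 (mem_filter.1 hB).1

lemma subset_of_shatters_traces [DecidableEq α] (hB : (traces 𝒮 A).Shatters B) : B ⊆ A := by
  obtain ⟨T, hT, hBT⟩ := hB.exists_superset
  exact hBT.trans (subset_of_mem_traces hT)

lemma HasVCDimLE.card_le_of_shatters_traces [DecidableEq α] (h𝒮 : HasVCDimLE 𝒮 d)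
    (hB : (traces 𝒮 A).Shatters B) : #B ≤ d := by
  refine h𝒮 B fun D hD ↦ ?_
  obtain ⟨T, hT, rfl⟩ := hB hD
  obtain ⟨S, hS, hST⟩ := mem_traces.1 hT
  have hBA : (B : Set α) ⊆ A := coe_subset.2 (subset_of_shatters_traces hB)
  refine ⟨S, hS, ?_⟩
  rw [coe_inter, ← hST, Set.inter_comm S A, ← Set.inter_assoc, Set.inter_eq_left.2 hBA,
    Set.inter_comm]

/-- The Sauer–Shelah lemma, as a generating function bound with a free parameter `s`. -/
lemma HasVCDimLE.card_traces_le (h𝒮 : HasVCDimLE 𝒮 d) (A : Finset α) {s : ℝ} (hs : 1 ≤ s) :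
    (#(traces 𝒮 A) : ℝ) ≤ s ^ d * (1 + s⁻¹) ^ #A := by
  classical
  have : 0 < s := by linarith
  calc (#(traces 𝒮 A) : ℝ)
      ≤ #(traces 𝒮 A).shatterer := mod_cast card_le_card_shatterer _
    _ = ∑ B ∈ (traces 𝒮 A).shatterer, 1 := by simp
    _ ≤ ∑ B ∈ (traces 𝒮 A).shatterer, s ^ d * s⁻¹ ^ #B := by
        refine sum_le_sum fun B hB ↦ ?_
        have hBd := h𝒮.card_le_of_shatters_traces (mem_shatterer.1 hB)
        rw [inv_pow, ← div_eq_mul_inv, one_le_div (by positivity)]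
        exact pow_le_pow_right₀ hs hBd
    _ ≤ ∑ B ∈ A.powerset, s ^ d * s⁻¹ ^ #B := by
        refine sum_le_sum_of_subset_of_nonneg (fun B hB ↦ ?_) fun _ _ _ ↦ by positivity
        exact mem_powerset.2 (subset_of_shatters_traces (mem_shatterer.1 hB))
    _ = s ^ d * (1 + s⁻¹) ^ #A := by
        rw [← mul_sum, add_comm 1, ← sum_pow_mul_eq_add_pow]
        simp only [one_pow, mul_one]

end Traces

section Weights

variable {α ι : Type*} {S T : Set α} {p : α × α} {z : ι → α × α}

/-- The factor of a pair `p = (x, y)` of sample points in the weight of `S`: it is `0` if `x ∈ S`,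
and otherwise `2` or `1` according to whether `y ∈ S`. -/
noncomputable def pairWeight (S : Set α) (p : α × α) : ℝ≥0∞ :=
  Sᶜ.indicator 1 p.1 * (1 + S.indicator 1 p.2)

lemma pairWeight_add_pairWeight_swap_le (S : Set α) (p : α × α) :
    pairWeight S p + pairWeight S p.swap ≤ 2 := by
  by_cases h₁ : p.1 ∈ S <;> by_cases h₂ : p.2 ∈ S <;> simp [pairWeight, h₁, h₂, one_add_one_eq_two]

lemma pairWeight_congr (h₁ : p.1 ∈ S ↔ p.1 ∈ T) (h₂ : p.2 ∈ S ↔ p.2 ∈ T) :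
    pairWeight S p = pairWeight T p := by
  classical simp only [pairWeight, Set.indicator_apply, Set.mem_compl_iff, h₁, h₂]

/-- Exchange the two points of the `i`-th pair of the double sample `z` whenever `σ i` holds. -/
def swapAt (σ : ι → Bool) (z : ι → α × α) : ι → α × α :=
  fun i ↦ if σ i then (z i).swap else z i

variable [Fintype ι]

/-- The weight of `S` for a double sample `z` of pairs `(x i, y i)`: it is `2 ^ #{i | y i ∈ S}` if
`S` misses all `x i`, and `0` otherwise. -/
noncomputable def sampleWeight (S : Set α) (z : ι → α × α) : ℝ≥0∞ :=
  ∏ i, pairWeight S (z i)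

lemma sampleWeight_inter {A : Set α} (hz : ∀ i, (z i).1 ∈ A ∧ (z i).2 ∈ A) :
    sampleWeight (S ∩ A) z = sampleWeight S z :=
  prod_congr rfl fun i _ ↦ pairWeight_congr (by simp [(hz i).1]) (by simp [(hz i).2])

lemma iSup_sampleWeight_le_sum_traces (𝒮 : Set (Set α)) {A : Finset α}
    (hz : ∀ i, (z i).1 ∈ A ∧ (z i).2 ∈ A) :
    ⨆ S ∈ 𝒮, sampleWeight S z ≤ ∑ T ∈ traces 𝒮 A, sampleWeight (T : Set α) z := by
  refine iSup₂_le fun S hS ↦ ?_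
  have hST : S ∩ (A : Set α) = (A.finite_toSet.inter_of_right S).toFinset :=
    (Set.Finite.coe_toFinset _).symm
  rw [← sampleWeight_inter (A := A) hz, hST]
  exact single_le_sum (f := fun T : Finset α ↦ sampleWeight (T : Set α) z)
    (fun _ _ ↦ zero_le) (mem_traces.2 ⟨S, hS, hST⟩)

variable [DecidableEq ι]

lemma sum_sampleWeight_swapAt_le (S : Set α) (z : ι → α × α) :
    ∑ σ, sampleWeight S (swapAt σ z) ≤ 2 ^ Fintype.card ι := by
  calc ∑ σ, sampleWeight S (swapAt σ z)
      = ∏ i, ∑ b : Bool, pairWeight S (if b then (z i).swap else z i) := by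
        rw [Fintype.prod_sum]
        rfl
    _ ≤ ∏ _i : ι, 2 := by
        refine prod_le_prod (fun _ _ ↦ zero_le) fun i _ ↦ ?_
        rw [Fintype.sum_bool, add_comm]
        exact pairWeight_add_pairWeight_swap_le S (z i)
    _ = 2 ^ Fintype.card ι := by rw [prod_const, card_univ]

lemma sum_iSup_sampleWeight_swapAt_le (𝒮 : Set (Set α)) {A : Finset α}
    (hz : ∀ i, (z i).1 ∈ A ∧ (z i).2 ∈ A) :
    ∑ σ, ⨆ S ∈ 𝒮, sampleWeight S (swapAt σ z) ≤ 2 ^ Fintype.card ι * #(traces 𝒮 A) := by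
  have hswap (σ : ι → Bool) (i : ι) : (swapAt σ z i).1 ∈ A ∧ (swapAt σ z i).2 ∈ A := by
    unfold swapAt
    split_ifs
    exacts [(hz i).symm, hz i]
  calc ∑ σ, ⨆ S ∈ 𝒮, sampleWeight S (swapAt σ z)
      ≤ ∑ σ, ∑ T ∈ traces 𝒮 A, sampleWeight (T : Set α) (swapAt σ z) :=
        sum_le_sum fun σ _ ↦ iSup_sampleWeight_le_sum_traces 𝒮 (hswap σ)
    _ = ∑ T ∈ traces 𝒮 A, ∑ σ, sampleWeight (T : Set α) (swapAt σ z) := sum_comm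
    _ ≤ ∑ _T ∈ traces 𝒮 A, 2 ^ Fintype.card ι :=
        sum_le_sum fun _ _ ↦ sum_sampleWeight_swapAt_le _ z
    _ = 2 ^ Fintype.card ι * #(traces 𝒮 A) := by rw [sum_const, nsmul_eq_mul, mul_comm]

end Weights

section DoubleSampling

variable {α ι : Type*} [MeasurableSpace α] [Fintype ι] {S : Set α} {𝒮 : Set (Set α)}

lemma measurable_pairWeight (hS : MeasurableSet S) : Measurable (pairWeight S) :=
  ((measurable_one.indicator hS.compl).comp measurable_fst).mul
    (((measurable_one.indicator hS).comp measurable_snd).const_add 1)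

lemma measurable_iSup_sampleWeight (h𝒮 : 𝒮.Countable) (hmeas : ∀ S ∈ 𝒮, MeasurableSet S) :
    Measurable fun z : ι → α × α ↦ ⨆ S ∈ 𝒮, sampleWeight S z :=
  .biSup 𝒮 h𝒮 fun S hS ↦ Finset.measurable_prod _ fun i _ ↦
    (measurable_pairWeight (hmeas S hS)).comp (measurable_pi_apply i)

variable (μ : Measure α) [IsProbabilityMeasure μ]

lemma measurePreserving_swapAt (σ : ι → Bool) :
    MeasurePreserving (swapAt σ) (.pi fun _ : ι ↦ μ.prod μ) (.pi fun _ : ι ↦ μ.prod μ) := by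
  refine measurePreserving_pi (f := fun i (p : α × α) ↦ if σ i then p.swap else p) _ _ fun i ↦ ?_
  cases σ i
  exacts [.id _, Measure.measurePreserving_swap]

variable {μ}

lemma lintegral_le_of_sum_swapAt_le [DecidableEq ι] {f : (ι → α × α) → ℝ≥0∞} (hf : Measurable f)
    {K : ℝ≥0∞} (hK : ∀ z, ∑ σ, f (swapAt σ z) ≤ 2 ^ Fintype.card ι * K) :
    ∫⁻ z, f z ∂.pi (fun _ ↦ μ.prod μ) ≤ K := by
  have hinv (σ : ι → Bool) :
      ∫⁻ z, f (swapAt σ z) ∂.pi (fun _ ↦ μ.prod μ) = ∫⁻ z, f z ∂.pi (fun _ ↦ μ.prod μ) :=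
    (measurePreserving_swapAt μ σ).lintegral_comp hf
  have hmul : 2 ^ Fintype.card ι * ∫⁻ z, f z ∂.pi (fun _ ↦ μ.prod μ) ≤ 2 ^ Fintype.card ι * K :=
    calc 2 ^ Fintype.card ι * ∫⁻ z, f z ∂.pi (fun _ ↦ μ.prod μ)
        = ∑ σ, ∫⁻ z, f (swapAt σ z) ∂.pi (fun _ ↦ μ.prod μ) := by
          simp [hinv]
      _ = ∫⁻ z, ∑ σ, f (swapAt σ z) ∂.pi (fun _ ↦ μ.prod μ) :=
          (lintegral_finsetSum _ fun σ _ ↦ hf.comp (measurePreserving_swapAt μ σ).measurable).symm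
      _ ≤ ∫⁻ _z : ι → α × α, 2 ^ Fintype.card ι * K ∂.pi (fun _ ↦ μ.prod μ) :=
          lintegral_mono hK
      _ = 2 ^ Fintype.card ι * K := by simp
  exact (ENNReal.mul_le_mul_iff_right (by simp) (by simp)).1 hmul

lemma lintegral_iSup_sampleWeight_le (h𝒮 : 𝒮.Countable) (hmeas : ∀ S ∈ 𝒮, MeasurableSet S)
    {K : ℝ≥0∞} (hK : ∀ A : Finset α, #A ≤ 2 * Fintype.card ι → #(traces 𝒮 A) ≤ K) :
    ∫⁻ z : ι → α × α, ⨆ S ∈ 𝒮, sampleWeight S z ∂.pi (fun _ ↦ μ.prod μ) ≤ K := by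
  classical
  refine lintegral_le_of_sum_swapAt_le (measurable_iSup_sampleWeight h𝒮 hmeas) fun z ↦ ?_
  let A := univ.image (fun i ↦ (z i).1) ∪ univ.image fun i ↦ (z i).2
  have hA : #A ≤ 2 * Fintype.card ι :=
    calc #A ≤ Fintype.card ι + Fintype.card ι :=
          (card_union_le _ _).trans (add_le_add card_image_le card_image_le)
      _ = 2 * Fintype.card ι := (two_mul _).symm
  have hz (i : ι) : (z i).1 ∈ A ∧ (z i).2 ∈ A := by simp [A]
  exact (sum_iSup_sampleWeight_swapAt_le 𝒮 hz).trans (by gcongr; exact hK A hA)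

lemma lintegral_sampleWeight_of_forall_notMem (hS : MeasurableSet S) {x : ι → α}
    (hx : ∀ i, x i ∉ S) :
    ∫⁻ y, sampleWeight S (fun i ↦ (x i, y i)) ∂.pi (fun _ ↦ μ) = (1 + μ S) ^ Fintype.card ι := by
  have hfactor : Measurable fun a ↦ 1 + S.indicator (1 : α → ℝ≥0∞) a :=
    (measurable_one.indicator hS).const_add 1
  have hindep : iIndepFun (fun i (y : ι → α) ↦ 1 + S.indicator (1 : α → ℝ≥0∞) (y i))
      (.pi fun _ ↦ μ) :=
    iIndepFun_pi fun _ ↦ hfactor.aemeasurable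
  calc ∫⁻ y, sampleWeight S (fun i ↦ (x i, y i)) ∂.pi (fun _ ↦ μ)
      = ∫⁻ y : ι → α, ∏ i, (1 + S.indicator 1 (y i)) ∂.pi (fun _ ↦ μ) := by
        simp [sampleWeight, pairWeight, hx]
    _ = ∏ i, ∫⁻ y : ι → α, 1 + S.indicator 1 (y i) ∂.pi (fun _ ↦ μ) :=
        lintegral_prod_eq_prod_lintegral_of_indepFun univ _ hindep
          fun i ↦ hfactor.comp (measurable_pi_apply i)
    _ = ∏ _i : ι, ∫⁻ a, 1 + S.indicator 1 a ∂μ :=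
        prod_congr rfl fun i _ ↦ (measurePreserving_eval (fun _ ↦ μ) i).lintegral_comp hfactor
    _ = (1 + μ S) ^ Fintype.card ι := by
        simp [lintegral_add_left, lintegral_indicator_one hS]

lemma one_add_pow_le_lintegral_iSup_sampleWeight (h𝒮 : 𝒮.Countable)
    (hmeas : ∀ S ∈ 𝒮, MeasurableSet S) {ε : ℝ≥0∞}
    (hmiss : ∀ x : ι → α, ∃ S ∈ 𝒮, ε ≤ μ S ∧ ∀ i, x i ∉ S) :
    (1 + ε) ^ Fintype.card ι ≤
      ∫⁻ z : ι → α × α, ⨆ S ∈ 𝒮, sampleWeight S z ∂.pi (fun _ ↦ μ.prod μ) := by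
  have hmeasurable := measurable_iSup_sampleWeight (ι := ι) h𝒮 hmeas
  have hzip := (measurePreserving_arrowProdEquivProdArrow α α ι (fun _ ↦ μ) fun _ ↦ μ).symm
  calc (1 + ε) ^ Fintype.card ι
      = ∫⁻ _x : ι → α, (1 + ε) ^ Fintype.card ι ∂.pi (fun _ ↦ μ) := by simp
    _ ≤ ∫⁻ x : ι → α, ∫⁻ y : ι → α, ⨆ S ∈ 𝒮, sampleWeight S (fun i ↦ (x i, y i))
          ∂.pi (fun _ ↦ μ) ∂.pi (fun _ ↦ μ) := by
        refine lintegral_mono fun x ↦ ?_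
        obtain ⟨S, hS, hε, hx⟩ := hmiss x
        calc (1 + ε) ^ Fintype.card ι ≤ (1 + μ S) ^ Fintype.card ι := by gcongr
          _ = ∫⁻ y, sampleWeight S (fun i ↦ (x i, y i)) ∂.pi (fun _ ↦ μ) :=
              (lintegral_sampleWeight_of_forall_notMem (hmeas S hS) hx).symm
          _ ≤ _ := lintegral_mono fun y ↦
              le_iSup₂ (f := fun S _ ↦ sampleWeight S fun i ↦ (x i, y i)) S hS
    _ = ∫⁻ z : ι → α × α, ⨆ S ∈ 𝒮, sampleWeight S z ∂.pi (fun _ ↦ μ.prod μ) := by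
        rw [← hzip.lintegral_comp hmeasurable]
        exact (lintegral_prod _ (hmeasurable.comp hzip.measurable).aemeasurable).symm

theorem exists_net_of_card_traces_lt (μ : Measure α) [IsProbabilityMeasure μ] (h𝒮 : 𝒮.Countable)
    (hmeas : ∀ S ∈ 𝒮, MeasurableSet S) {m : ℕ} {K ε : ℝ≥0∞}
    (hK : ∀ A : Finset α, #A ≤ 2 * m → #(traces 𝒮 A) ≤ K) (hlt : K < (1 + ε) ^ m) :
    ∃ N : Finset α, #N ≤ m ∧ ∀ S ∈ 𝒮, ε ≤ μ S → (S ∩ N).Nonempty := by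
  classical
  by_contra! hnet
  have hmiss (x : Fin m → α) : ∃ S ∈ 𝒮, ε ≤ μ S ∧ ∀ i, x i ∉ S := by
    obtain ⟨S, hS, hε, hdisj⟩ := hnet (univ.image x) (card_image_le.trans_eq (card_fin m))
    refine ⟨S, hS, hε, fun i hi ↦ ?_⟩
    have hmem : x i ∈ S ∩ (univ.image x : Finset α) := ⟨hi, by simp⟩
    exact Set.notMem_empty _ (hdisj ▸ hmem)
  have hlower := one_add_pow_le_lintegral_iSup_sampleWeight h𝒮 hmeas hmiss
  have hupper := lintegral_iSup_sampleWeight_le (ι := Fin m) (μ := μ) h𝒮 hmeas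
    (by simpa using hK)
  rw [Fintype.card_fin] at hlower
  exact (hlower.trans hupper).not_gt hlt

end DoubleSampling

lemma exp_half_le_one_add {x : ℝ} (hx₀ : 0 ≤ x) (hx₁ : x ≤ 1) : Real.exp (x / 2) ≤ 1 + x := by
  rw [← Real.le_log_iff_exp_le (by positivity)]
  refine le_trans ?_ (Real.one_sub_inv_le_log_of_pos (by positivity))
  have hsub : 1 - (1 + x)⁻¹ = x / (1 + x) := by field_simp; ring
  rw [hsub]
  exact div_le_div_of_nonneg_left hx₀ (by positivity) (by linarith)

/-- The left side is the bound of `HasVCDimLE.card_traces_le` for `2 * m` points at `s = 8 * r`. -/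
lemma pow_mul_one_add_inv_pow_lt {r : ℝ} (hr : 2 ≤ r) {d m : ℕ}
    (hm : 16 * (d * r * Real.log r) < m) :
    (8 * r) ^ d * (1 + (8 * r)⁻¹) ^ (2 * m) < (1 + 1 / r) ^ m := by
  have hr₀ : 0 < r := by linarith
  have hpoly : (8 * r) ^ d < Real.exp (m / (4 * r)) :=
    calc (8 * r) ^ d ≤ (r ^ 4) ^ d := by
          have : (2 : ℝ) ^ 3 ≤ r ^ 3 := by gcongr
          gcongr
          nlinarith
      _ = Real.exp (4 * d * Real.log r) := by
          rw [← pow_mul, mul_comm _ (Real.log r), Real.exp_mul, Real.exp_log hr₀]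
          exact_mod_cast (Real.rpow_natCast r (4 * d)).symm
      _ < Real.exp (m / (4 * r)) := by
          rw [Real.exp_lt_exp, lt_div_iff₀ (by positivity)]
          linarith
  have hgrowth : (1 + (8 * r)⁻¹) ^ (2 * m) ≤ Real.exp (m / (4 * r)) :=
    calc (1 + (8 * r)⁻¹) ^ (2 * m) ≤ Real.exp (8 * r)⁻¹ ^ (2 * m) := by
          gcongr
          linarith [Real.add_one_le_exp (8 * r)⁻¹]
      _ = Real.exp (m / (4 * r)) := by
          rw [← Real.exp_nat_mul]
          congr 1
          push_cast
          field_simp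
          ring
  calc (8 * r) ^ d * (1 + (8 * r)⁻¹) ^ (2 * m)
      < Real.exp (m / (4 * r)) * Real.exp (m / (4 * r)) :=
        mul_lt_mul hpoly hgrowth (by positivity) (by positivity)
    _ = Real.exp (1 / r / 2) ^ m := by
        rw [← Real.exp_add, ← Real.exp_nat_mul]
        congr 1
        field_simp
        ring
    _ ≤ (1 + 1 / r) ^ m := by
        gcongr
        exact exp_half_le_one_add (by positivity) (by rw [div_le_one hr₀]; linarith)

lemma one_le_mul_mul_log {d : ℕ} (hd : 1 ≤ d) {r : ℝ} (hr : 2 ≤ r) : 1 ≤ d * r * Real.log r := by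
  have hdr : 2 ≤ d * r := by nlinarith [Nat.one_le_cast (α := ℝ).2 hd]
  have hlog : 1 / 2 ≤ Real.log r := by
    linarith [Real.log_two_gt_d9, Real.log_le_log two_pos hr]
  nlinarith

theorem exists_net_of_hasVCDimLE {α : Type*} [MeasurableSpace α] (μ : Measure α)
    [IsProbabilityMeasure μ] {𝒮 : Set (Set α)} (h𝒮 : 𝒮.Countable)
    (hmeas : ∀ S ∈ 𝒮, MeasurableSet S) {d : ℕ} (hd : 1 ≤ d) (hvc : HasVCDimLE 𝒮 d)
    {r : ℝ} (hr : 2 ≤ r) :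
    ∃ N : Finset α, (#N : ℝ) ≤ 17 * d * r * Real.log r ∧
      ∀ S ∈ 𝒮, 1 / r < μ.real S → (S ∩ N).Nonempty := by
  set L := d * r * Real.log r
  have hL₁ : 1 ≤ L := one_le_mul_mul_log hd hr
  set m := ⌊16 * L⌋₊ + 1 with hm
  have hmL : (m : ℝ) ≤ 17 * L := by
    have hfloor := Nat.floor_le (a := 16 * L) (by positivity)
    push_cast [hm]
    linarith
  have hlt : ENNReal.ofReal ((8 * r) ^ d * (1 + (8 * r)⁻¹) ^ (2 * m)) <
      (1 + ENNReal.ofReal (1 / r)) ^ m := by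
    rw [← ENNReal.ofReal_one, ← ENNReal.ofReal_add zero_le_one (by positivity),
      ← ENNReal.ofReal_pow (by positivity), ENNReal.ofReal_lt_ofReal_iff (by positivity)]
    exact pow_mul_one_add_inv_pow_lt hr (by exact_mod_cast Nat.lt_floor_add_one (16 * L))
  have htraces (A : Finset α) (hA : #A ≤ 2 * m) : (#(traces 𝒮 A) : ℝ≥0∞) ≤
      ENNReal.ofReal ((8 * r) ^ d * (1 + (8 * r)⁻¹) ^ (2 * m)) := by
    rw [← ENNReal.ofReal_natCast]
    refine ENNReal.ofReal_le_ofReal ((hvc.card_traces_le A (s := 8 * r) (by linarith)).trans ?_)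
    have hbase : 1 ≤ 1 + (8 * r)⁻¹ := le_add_of_nonneg_right (by positivity)
    gcongr
  obtain ⟨N, hNm, hN⟩ := exists_net_of_card_traces_lt μ h𝒮 hmeas htraces hlt
  refine ⟨N, ?_, fun S hS hrS ↦ hN S hS (ENNReal.ofReal_le_of_le_toReal hrS.le)⟩
  calc (#N : ℝ) ≤ m := mod_cast hNm
    _ ≤ 17 * d * r * Real.log r := by linarith

theorem strong_net_of_vc_dim_general {α : Type*} [MeasurableSpace α] (μ : Measure α)
    [IsFiniteMeasure μ] {𝒮 : Set (Set α)} (h𝒮 : 𝒮.Countable) (hmeas : ∀ S ∈ 𝒮, MeasurableSet S)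
    {d : ℕ} (hd : 1 ≤ d) (hvc : HasVCDimLE 𝒮 d) {r : ℝ} (hr : 2 ≤ r) :
    ∃ N : Finset α, (N : Set α) ⊆ ⋃₀ 𝒮 ∧ (#N : ℝ) ≤ 17 * d * r * Real.log r ∧
      ∀ S ∈ 𝒮, μ.real Set.univ / r < μ.real S → (S ∩ N).Nonempty := by
  classical
  rcases eq_zero_or_neZero μ with rfl | _
  · have hlog := Real.log_nonneg (one_le_two.trans hr)
    exact ⟨∅, by simp, by rw [card_empty, Nat.cast_zero]; positivity, by simp⟩
  obtain ⟨N, hNcard, hN⟩ := exists_net_of_hasVCDimLE ((μ Set.univ)⁻¹ • μ) h𝒮 hmeas hd hvc hr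
  refine ⟨{a ∈ N | a ∈ ⋃₀ 𝒮}, fun a ha ↦ (mem_filter.1 ha).2, le_trans ?_ hNcard,
    fun S hS hlt ↦ ?_⟩
  · exact_mod_cast card_filter_le _ _
  · have hnormalized : 1 / r < ((μ Set.univ)⁻¹ • μ).real S := by
      rw [measureReal_ennreal_smul_apply, ENNReal.toReal_inv, ← measureReal_def,
        lt_inv_mul_iff₀ measureReal_univ_pos]
      rwa [mul_one_div]
    obtain ⟨a, haS, haN⟩ := hN S hS hnormalized
    exact ⟨a, haS, mem_filter.2 ⟨haN, S, hS, haS⟩⟩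

lemma hasVCDimLE_coe_image {α : Type} [DecidableEq α] {X : Finset α} {𝒮 : Finset (Finset α)}
    (h𝒮 : ∀ S ∈ 𝒮, S ⊆ X) {d : ℕ} (hd : ∀ A ⊆ X, Shattered 𝒮 A → #A ≤ d) :
    HasVCDimLE ((↑) '' (𝒮 : Set (Finset α)) : Set (Set α)) d := by
  intro A hA
  have hshat : Shattered 𝒮 A := fun B hB ↦ by
    obtain ⟨_, ⟨S, hS, rfl⟩, hSB⟩ := hA B hB
    exact ⟨S, hS, mod_cast hSB⟩
  obtain ⟨S, hS, hSA⟩ := hshat A subset_rfl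
  exact hd A ((inter_eq_right.1 hSA).trans (h𝒮 S hS)) hshat

/-- Haussler–Welzl: there is an absolute constant `C` such that every
finite set system on `n` elements of VC-dimension at most `d ≥ 1` admits, for every
`r ≥ 2`, a strong `(1/r)`-net of size at most `C·d·r·log r`. -/
theorem strong_net_of_vc_dim : ∃ C : ℝ, 0 < C ∧
    ∀ (α : Type) (_ : DecidableEq α) (X : Finset α) (𝒮 : Finset (Finset α)),
      (∀ S' ∈ 𝒮, S' ⊆ X) →
      ∀ d : ℕ, 1 ≤ d → (∀ A ⊆ X, Shattered 𝒮 A → A.card ≤ d) →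
      ∀ r : ℝ, 2 ≤ r →
        ∃ N ⊆ X, (N.card : ℝ) ≤ C * d * r * Real.log r ∧
          ∀ S' ∈ 𝒮, (X.card : ℝ) / r < (S'.card : ℝ) → (S' ∩ N).Nonempty := by
  refine ⟨17, by norm_num, fun α _ X 𝒮 h𝒮 d hd hvc r hr ↦ ?_⟩
  let _ : MeasurableSpace α := ⊤
  let μ := Measure.count.restrict (X : Set α)
  have : IsFiniteMeasure μ := ⟨by simp [μ]⟩
  have hμ (S : Finset α) (hS : S ⊆ X) : μ.real S = #S := by
    simp [μ, measureReal_def, Set.inter_eq_left.2 (coe_subset.2 hS)]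
  obtain ⟨N, hNsub, hNcard, hN⟩ := strong_net_of_vc_dim_general μ
    (𝒮.finite_toSet.image (↑)).countable (fun _ _ ↦ .of_discrete) hd
    (hasVCDimLE_coe_image h𝒮 hvc) hr
  refine ⟨N, fun a ha ↦ ?_, hNcard, fun S hS hlt ↦ ?_⟩
  · obtain ⟨_, ⟨S, hS, rfl⟩, haS⟩ := hNsub ha
    exact h𝒮 S hS haS
  · have hheavy : μ.real Set.univ / r < μ.real S := by
      rwa [hμ S (h𝒮 S hS), measureReal_restrict_apply_univ, ← measureReal_restrict_apply_self,
        hμ X subset_rfl]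
    exact_mod_cast hN S ⟨S, hS, rfl⟩ hheavy
end
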